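/- Assume moreover that G is nontrivial, and set I = Ĩ ∖ {i₀}. Then c_{ii} = 0 for all i ∈ Ĩ, c_{ij} = c_{ji} for all i, j, and the matrix (2δ_{ij} − c_{ij})_{i,j∈I} (with diagonal entries 2 and off-diagonal entries −c_{ij} ≤ 0) is symmetric and positive definite: Σ_{i,j∈I} x_i x_j (2δ_{ij} − c_{ij}) > 0 for every nonzero x : I → ℝ. -/

import Mathlib

open scoped BigOperators
open CategoryTheory Matrix

/-!
Write `θ g` for the trace of `φ g`, which is real, and `n = 2` for the degree of `φ`. The matrix
`n δ - c` is the Gram matrix of the irreducible characters for the inner product on functions on `G`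
with weight `(n - θ g) / |G|`. As `φ` is faithful and unitarizable, this weight is positive away
from `1`. A nonzero combination of irreducible characters that omits some `χ₀` is orthogonal to
`χ₀`, and `χ₀ 1 ≠ 0`, so the combination is not supported at `1`; hence its norm is positive.

An irreducible character of a nontrivial group is not supported at `1` either, so `c i i < 2`. If
`|G|` is even, then `-1` lies in the image of `φ`, and translation by this central element changes
the sign of the sum defining `c i i`. If `|G|` is odd, then pairing `g` with `g⁻¹` shows, modulo `2`
in the ring of algebraic integers, that `c i i ≡ n * d i ^ 2 ≡ 0`.
-/

open scoped ComplexConjugate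

section MatrixRepresentation

variable {G n 𝕜 : Type*} [Group G] [Fintype n] [DecidableEq n] [RCLike 𝕜]

open scoped ComplexOrder in
theorem exists_posDef_conjTranspose_mul_mul_eq [Finite G] (A : G →* Matrix n n 𝕜) :
    ∃ H : Matrix n n 𝕜, H.PosDef ∧ ∀ g, (A g)ᴴ * H * A g = H := by
  have := Fintype.ofFinite G
  classical
  refine ⟨∑ k : G, (A k)ᴴ * A k, ?_, fun g ↦ ?_⟩
  · rw [← Finset.add_sum_erase _ _ (Finset.mem_univ (1 : G)), map_one, conjTranspose_one, one_mul]
    exact PosDef.one.add_posSemidef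
      (posSemidef_sum _ fun k _ ↦ posSemidef_conjTranspose_mul_self _)
  · simp_rw [Finset.mul_sum, Finset.sum_mul]
    exact Fintype.sum_equiv (Equiv.mulRight g) _ _ fun k ↦ by
      simp [conjTranspose_mul, Matrix.mul_assoc]

open scoped ComplexOrder in
theorem exists_conj_mem_unitaryGroup [Finite G] (A : G →* Matrix n n 𝕜) :
    ∃ P : (Matrix n n 𝕜)ˣ, ∀ g, P * A g * P⁻¹ ∈ unitaryGroup n 𝕜 := by
  obtain ⟨H, hH, hinv⟩ := exists_posDef_conjTranspose_mul_mul_eq A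
  obtain ⟨Q, hQ⟩ : ∃ Q : Matrix n n 𝕜, H = Qᴴ * Q := by
    open scoped MatrixOrder in
    exact CStarAlgebra.nonneg_iff_eq_star_mul_self.mp hH.posSemidef.nonneg
  obtain ⟨P, rfl⟩ : IsUnit Q := isUnit_of_mul_isUnit_right (hQ ▸ hH.isUnit)
  refine ⟨P, fun g ↦ mem_unitaryGroup_iff'.2 ?_⟩
  set R : Matrix n n 𝕜 := ↑P⁻¹
  have hPR : P.val * R = 1 := P.mul_inv
  calc star (P.val * A g * R) * (P * A g * R)
      = Rᴴ * ((A g)ᴴ * (P.valᴴ * P) * A g) * R := by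
        simp only [star_eq_conjTranspose, conjTranspose_mul, Matrix.mul_assoc]
    _ = (P.val * R)ᴴ * (P * R) := by
        rw [← hQ, hinv, hQ, conjTranspose_mul]
        simp only [Matrix.mul_assoc]
    _ = 1 := by rw [hPR, conjTranspose_one, one_mul]

theorem conj_trace_eq_trace_inv [Finite G] (A : G →* Matrix n n 𝕜) (g : G) :
    conj (A g).trace = (A g⁻¹).trace := by
  obtain ⟨P, hP⟩ := exists_conj_mem_unitaryGroup A
  have hinv : P * A g⁻¹ * P⁻¹ = star (P * A g * P⁻¹ : Matrix n n 𝕜) := by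
    refine (left_inv_eq_right_inv (mem_unitaryGroup_iff'.1 (hP g)) ?_).symm
    simp [Matrix.mul_assoc, ← Matrix.mul_assoc (A g), ← map_mul]
  rw [← trace_units_conj P (A g⁻¹), hinv, star_eq_conjTranspose, trace_conjTranspose,
    trace_units_conj, starRingEnd_apply]

open scoped ComplexOrder in
theorem re_trace_lt_card_of_mem_unitaryGroup {U : Matrix n n 𝕜} (hU : U ∈ unitaryGroup n 𝕜)
    (hne : U ≠ 1) : RCLike.re U.trace < Fintype.card n := by
  have hpos : 0 < ((U - 1)ᴴ * (U - 1)).trace :=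
    (posSemidef_conjTranspose_mul_self _).trace_nonneg.lt_of_ne' fun h ↦
      hne (sub_eq_zero.1 (trace_conjTranspose_mul_self_eq_zero_iff.1 h))
  have hexpand : (U - 1)ᴴ * (U - 1) = 1 + 1 - (U + Uᴴ) := by
    have hUU : Uᴴ * U = 1 := mem_unitaryGroup_iff'.1 hU
    rw [conjTranspose_sub, conjTranspose_one, sub_mul, mul_sub, mul_sub, hUU]
    noncomm_ring
  have hre := (RCLike.pos_iff.1 (hexpand ▸ hpos)).1
  simp only [trace_sub, trace_add, trace_one, trace_conjTranspose, map_sub, map_add,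
    RCLike.natCast_re, RCLike.star_def, RCLike.conj_re] at hre
  linarith

theorem re_trace_lt_card [Finite G] {A : G →* Matrix n n 𝕜} {g : G} (hg : A g ≠ 1) :
    RCLike.re (A g).trace < Fintype.card n := by
  obtain ⟨P, hP⟩ := exists_conj_mem_unitaryGroup A
  rw [← trace_units_conj P]
  refine re_trace_lt_card_of_mem_unitaryGroup (hP g) fun h ↦ hg ?_
  rwa [Units.mul_inv_eq_iff_eq_mul, one_mul, P.isUnit.mul_eq_left] at h

end MatrixRepresentation

theorem isIntegral_trace_of_isIntegral {n R K : Type*} [Fintype n] [DecidableEq n] [CommRing R]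
    [Field K] [IsAlgClosed K] [Algebra R K] {A : Matrix n n K}
    (hA : IsIntegral R A) : IsIntegral R A.trace := by
  rw [trace_eq_sum_roots_charpoly]
  refine IsIntegral.multiset_sum fun z hz ↦ ?_
  have hz := mem_spectrum_of_isRoot_charpoly (Polynomial.isRoot_of_mem_roots hz)
  have : Nontrivial (Matrix n n K) := by
    by_contra h
    rw [not_nontrivial_iff_subsingleton] at h
    simp [spectrum.of_subsingleton] at hz
  obtain ⟨p, hp, hpA⟩ := hA
  have hpz := spectrum.subset_polynomial_aeval A (p.map (algebraMap R K)) ⟨z, hz, rfl⟩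
  rw [Polynomial.aeval_map_algebraMap, Polynomial.aeval_def, hpA, spectrum.zero_eq] at hpz
  exact ⟨p, hp, by rwa [← Polynomial.eval_map]⟩

theorem isIntegral_trace_of_finite {G n K : Type*} [Group G] [Finite G] [Fintype n] [DecidableEq n]
    [Field K] [IsAlgClosed K] (A : G →* Matrix n n K) (g : G) : IsIntegral ℤ (A g).trace :=
  isIntegral_trace_of_isIntegral <| .of_pow Nat.card_pos <| by
    rw [← map_pow, pow_card_eq_one', map_one]; exact isIntegral_one

theorem trace_adjugate_fin_two {R : Type*} [CommRing R] (M : Matrix (Fin 2) (Fin 2) R) :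
    M.adjugate.trace = M.trace := by
  simp [adjugate_fin_two, trace_fin_two, add_comm]

theorem conj_trace_specialLinearGroup_fin_two {G : Type*} [Group G] [Finite G]
    (φ : G →* SpecialLinearGroup (Fin 2) ℂ) (g : G) :
    conj (φ g).1.trace = (φ g).1.trace :=
  (conj_trace_eq_trace_inv (SpecialLinearGroup.coeMonoidHom.comp φ) g).trans <| by
    simp [trace_adjugate_fin_two]

theorem specialLinearGroup_fin_two_eq_neg_one {R : Type*} [CommRing R] [IsDomain R]
    [NeZero (2 : R)] {M : SpecialLinearGroup (Fin 2) R} (hsq : M * M = 1) (hne : M ≠ 1) :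
    M = -1 := by
  have hentry (i j) : M i j = adjugate M.1 i j := by
    conv_lhs => rw [← inv_eq_of_mul_eq_one_right hsq]
    simp
  have h01 : M 0 1 = 0 := by
    simpa [adjugate_fin_two, eq_neg_iff_add_eq_zero, ← two_mul, NeZero.ne] using hentry 0 1
  have h10 : M 1 0 = 0 := by
    simpa [adjugate_fin_two, eq_neg_iff_add_eq_zero, ← two_mul, NeZero.ne] using hentry 1 0
  have h11 : M 1 1 = M 0 0 := by simpa [adjugate_fin_two] using hentry 1 1
  have hdet : M 0 0 * M 0 0 = 1 := by
    have := M.2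
    rwa [det_fin_two, h01, h11, zero_mul, sub_zero] at this
  rcases mul_self_eq_one_iff.1 hdet with h | h
  · refine absurd ?_ hne
    ext i j
    fin_cases i <;> fin_cases j <;> simp [h01, h10, h11, h]
  · ext i j
    fin_cases i <;> fin_cases j <;> simp [h01, h10, h11, h]

theorem exists_mem_center_map_eq_neg_one {G R : Type*} [Group G] [Finite G] [CommRing R]
    [IsDomain R] [NeZero (2 : R)] {φ : G →* SpecialLinearGroup (Fin 2) R}
    (hφ : Function.Injective φ) (heven : Even (Nat.card G)) :
    ∃ z ∈ Subgroup.center G, φ z = -1 := by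
  have : Fact (Nat.Prime 2) := ⟨Nat.prime_two⟩
  obtain ⟨z, hz⟩ := exists_prime_orderOf_dvd_card' 2 heven.two_dvd
  obtain ⟨hsq, hne⟩ := orderOf_eq_prime_iff.1 hz
  have hφz : φ z = -1 := specialLinearGroup_fin_two_eq_neg_one
    (by rw [← map_mul, ← pow_two, hsq, map_one]) ((map_ne_one_iff φ hφ).2 hne)
  exact ⟨z, Subgroup.mem_center_iff.2 fun g ↦ hφ (by simp [hφz]), hφz⟩

theorem two_dvd_sum_sub_apply_one {G R : Type*} [Group G] [Fintype G] [CommRing R]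
    (hodd : Odd (Fintype.card G)) {f : G → R} (hf : ∀ g, f g⁻¹ = f g) :
    2 ∣ ∑ g, f g - f 1 := by
  classical
  rw [← Finset.sum_erase_eq_sub (Finset.mem_univ 1), ← Ideal.mem_span_singleton,
    ← Ideal.Quotient.eq_zero_iff_mem, map_sum]
  have htwo : (2 : R ⧸ Ideal.span {(2 : R)}) = 0 :=
    Ideal.Quotient.eq_zero_iff_mem.2 (Ideal.mem_span_singleton_self 2)
  refine Finset.sum_involution (fun g _ ↦ g⁻¹) (fun g _ ↦ ?_) (fun g hg _ hinv ↦ ?_)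
    (fun g hg ↦ by simpa using hg) fun g _ ↦ inv_inv g
  · rw [hf, ← two_mul, htwo, zero_mul]
  · have hsq : g ^ 2 = 1 := by rw [pow_two, ← inv_eq_iff_mul_eq_one, hinv]
    have hord : orderOf g = 2 := orderOf_eq_prime hsq (Finset.ne_of_mem_erase hg)
    exact Nat.not_even_iff_odd.2 hodd (even_iff_two_dvd.2 (hord ▸ orderOf_dvd_card))

theorem intCast_dvd_of_isIntegral {K : Type*} [Field K] [CharZero K] {a b : ℤ} {x : K}
    (hx : IsIntegral ℤ x) (h : (b : K) = a * x) : a ∣ b := by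
  obtain rfl | ha := eq_or_ne a 0
  · simpa using h
  · have haK : (a : K) ≠ 0 := Int.cast_ne_zero.2 ha
    obtain ⟨k, rfl⟩ := hx.exists_int_iff_exists_rat.1
      ⟨b / a, by push_cast; rw [h, mul_div_cancel_left₀ _ haK]⟩
    exact ⟨k, by exact_mod_cast h⟩

theorem modEq_two_of_sum_eq_card_mul {G K : Type*} [Group G] [Fintype G] [Field K]
    [CharZero K] (hodd : Odd (Fintype.card G)) {f : G → K} (hint : ∀ g, IsIntegral ℤ (f g))
    (hinv : ∀ g, f g⁻¹ = f g) {m c : ℤ} (hone : f 1 = m)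
    (hsum : ∑ g, f g = Fintype.card G * c) : c ≡ m [ZMOD 2] := by
  let f' (g : G) : integralClosure ℤ K := ⟨f g, hint g⟩
  obtain ⟨b, hb⟩ := two_dvd_sum_sub_apply_one hodd (f := f') fun g ↦ Subtype.ext (hinv g)
  have hdvd : (2 : ℤ) ∣ Fintype.card G * c - m := by
    refine intCast_dvd_of_isIntegral b.2 ?_
    have hbK : ∑ g, f g - f 1 = 2 * b := by
      have := congrArg (algebraMap (integralClosure ℤ K) K) hb
      rwa [map_sub, map_sum, map_mul, map_ofNat] at this
    rw [hsum, hone] at hbK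
    exact_mod_cast hbK
  have hcard : (Fintype.card G : ℤ) ≡ 1 [ZMOD 2] := Int.odd_iff.1 (by exact_mod_cast hodd)
  calc c ≡ Fintype.card G * c [ZMOD 2] := by simpa using (hcard.mul_right c).symm
    _ ≡ m [ZMOD 2] := (Int.modEq_iff_dvd.2 hdvd).symm

section Character

variable {k G : Type*} [Field k] [Group G]

theorem exists_matrix_trace_eq_character (V : FDRep k G) :
    ∃ A : G →* Matrix (Fin (Module.finrank k V)) (Fin (Module.finrank k V)) k,
      ∀ g, V.character g = (A g).trace :=
  ⟨(LinearMap.toMatrixAlgEquiv (Module.finBasis k V)).toAlgHom.toMonoidHom.comp V.ρ,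
    fun g ↦ LinearMap.trace_eq_matrix_trace k (Module.finBasis k V) (V.ρ g)⟩

theorem character_one_ne_zero [CharZero k] (V : FDRep k G) [Simple V] : V.character 1 ≠ 0 := by
  rw [FDRep.char_one, Nat.cast_ne_zero]
  intro h
  have hsub : Subsingleton V := Module.finrank_zero_iff.1 h
  refine id_nonzero V ?_
  ext v
  exact Subsingleton.elim _ _

theorem conj_character [Finite G] (V : FDRep ℂ G) (g : G) :
    conj (V.character g) = V.character g⁻¹ := by
  obtain ⟨A, hA⟩ := exists_matrix_trace_eq_character V
  rw [hA, hA, conj_trace_eq_trace_inv]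

variable [IsAlgClosed k]

theorem isIntegral_character [Finite G] (V : FDRep k G) (g : G) :
    IsIntegral ℤ (V.character g) := by
  obtain ⟨A, hA⟩ := exists_matrix_trace_eq_character V
  exact hA g ▸ isIntegral_trace_of_finite A g

theorem exists_smul_one_of_mem_center (V : FDRep k G) [Simple V] {z : G}
    (hz : z ∈ Subgroup.center G) : ∃ s : k, V.ρ z = s • 1 := by
  let f : V ⟶ V := ⟨Action.ρ V z, fun g ↦ by
    have := congrArg (Action.ρ V) (Subgroup.mem_center_iff.1 hz g)
    rw [map_mul, map_mul] at this
    exact this.symm⟩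
  obtain ⟨s, hs⟩ := endomorphism_simple_eq_smul_id k f
  exact ⟨s, (congrArg (fun e : V ⟶ V ↦ e.hom.hom.hom) hs).symm⟩

theorem exists_character_mul_eq_of_mem_center (V : FDRep k G) [Simple V] {z : G}
    (hz : z ∈ Subgroup.center G) : ∃ s : k, ∀ g, V.character (z * g) = s * V.character g := by
  obtain ⟨s, hs⟩ := exists_smul_one_of_mem_center V hz
  refine ⟨s, fun g ↦ ?_⟩
  calc V.character (z * g) = LinearMap.trace k V (s • V.ρ g) := by
        rw [← smul_one_mul, ← hs, ← map_mul]; rfl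
    _ = s * V.character g := map_smul _ _ _

theorem character_mul_character_inv_of_mem_center (V : FDRep k G) [Simple V] {z : G}
    (hz : z ∈ Subgroup.center G) (g : G) :
    V.character (z * g) * V.character (z * g)⁻¹ = V.character g * V.character g⁻¹ := by
  obtain ⟨s, hs⟩ := exists_character_mul_eq_of_mem_center V hz
  have hinv : V.character g⁻¹ = s * V.character (z * g)⁻¹ := by
    rw [← hs, _root_.mul_inv_rev, ← Subgroup.mem_center_iff.1 hz, inv_mul_cancel_right]
  rw [hs, hinv, mul_left_comm, mul_assoc]

-- A character supported at `1` is a multiple of the regular one, whose norm is too large.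
theorem exists_ne_one_character_ne_zero [CharZero k] [Finite G] [Nontrivial G]
    (V : FDRep k G) [Simple V] : ∃ g ≠ 1, V.character g ≠ 0 := by
  have := Fintype.ofFinite G
  by_contra! hvanish
  have hcard : (Nat.card G : k) ≠ 0 := Nat.cast_ne_zero.2 Nat.card_pos.ne'
  have := invertibleOfNonzero hcard
  obtain ⟨m, hm⟩ : ∃ m : ℕ, V.character 1 = Nat.card G * m := by
    have hinv := FDRep.average_char_eq_finrank_invariants V
    rw [Fintype.sum_eq_single 1 hvanish, inv_mul_eq_iff_eq_mul₀ hcard] at hinv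
    exact ⟨_, hinv⟩
  have hnorm : V.character 1 * V.character 1 = Nat.card G := by
    have horth := FDRep.char_orthonormal V V
    rw [Fintype.sum_eq_single 1 fun g hg ↦ by rw [hvanish g hg, zero_mul], inv_one,
      if_pos ⟨Iso.refl V⟩, inv_mul_eq_iff_eq_mul₀ hcard, mul_one] at horth
    exact horth
  have hone : Nat.card G * (m * m) = 1 := by
    rw [hm, mul_mul_mul_comm, mul_assoc, mul_eq_left₀ hcard] at hnorm
    exact_mod_cast hnorm
  exact Finite.one_lt_card.ne' (Nat.eq_one_of_mul_eq_one_right hone)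

end Character

section WInner

open RCLike

variable {α κ 𝕜 : Type*} [Fintype α] [RCLike 𝕜]

theorem wInner_sum_right (w : α → ℝ) (s : Finset κ) (f : α → 𝕜) (g : κ → α → 𝕜) :
    ⟪f, ∑ i ∈ s, g i⟫_[𝕜, w] = ∑ i ∈ s, ⟪f, g i⟫_[𝕜, w] := by
  simp only [wInner, Finset.sum_apply, inner_sum, Finset.smul_sum]
  exact Finset.sum_comm

theorem wInner_sum_left (w : α → ℝ) (s : Finset κ) (f : κ → α → 𝕜) (g : α → 𝕜) :
    ⟪∑ i ∈ s, f i, g⟫_[𝕜, w] = ∑ i ∈ s, ⟪f i, g⟫_[𝕜, w] := by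
  rw [← conj_wInner_symm, wInner_sum_right, map_sum]
  simp only [conj_wInner_symm]

theorem wInner_self_sum_smul (w : α → ℝ) (s : Finset κ) (x : κ → 𝕜) (f : κ → α → 𝕜) :
    ⟪∑ i ∈ s, x i • f i, ∑ i ∈ s, x i • f i⟫_[𝕜, w] =
      ∑ i ∈ s, ∑ j ∈ s, x i * conj (x j) * ⟪f j, f i⟫_[𝕜, w] := by
  simp only [wInner_sum_right, wInner_sum_left, wInner_smul_left, wInner_smul_right,
    smul_eq_mul, Finset.mul_sum, mul_assoc, starRingEnd_apply]

theorem re_wInner_self_pos {w : α → ℝ} (hw : 0 ≤ w) {f : α → 𝕜} {a : α} (hwa : 0 < w a)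
    (hfa : f a ≠ 0) : 0 < re ⟪f, f⟫_[𝕜, w] := by
  simp only [wInner, map_sum, smul_re]
  exact Finset.sum_pos' (fun b _ ↦ mul_nonneg (hw b) inner_self_nonneg)
    ⟨a, Finset.mem_univ a, mul_pos hwa (re_inner_self_pos.2 hfa)⟩

theorem exists_ne_apply_ne_zero_of_wInner_cWeight_eq_zero {f h : α → 𝕜} {a : α} (hf : f ≠ 0)
    (ha : h a ≠ 0) (horth : ⟪h, f⟫ₙ_[𝕜] = 0) : ∃ b ≠ a, f b ≠ 0 := by
  by_contra! hvanish
  have : Nonempty α := ⟨a⟩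
  rw [wInner, Fintype.sum_eq_single a fun b hb ↦ by simp [hvanish b hb]] at horth
  have hfa : f a = 0 := by simpa [ha] using horth
  refine hf (funext fun b ↦ ?_)
  obtain rfl | hb := eq_or_ne b a
  exacts [hfa, hvanish b hb]

end WInner

section McKay

open RCLike

variable {G n : Type*} [Group G] [Fintype G] [Fintype n]

open Classical in
theorem wInner_cWeight_character (V W : FDRep ℂ G) [Simple V] [Simple W] :
    ⟪W.character, V.character⟫ₙ_[ℂ] = if Nonempty (V ≅ W) then 1 else 0 := by
  have : Invertible (Nat.card G : ℂ) := invertibleOfNonzero (Nat.cast_ne_zero.2 Nat.card_pos.ne')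
  simp [wInner, ← FDRep.char_orthonormal V W, Finset.mul_sum, conj_character]

theorem linearIndependent_character {G κ : Type*} [Group G] [Finite G] {V : κ → FDRep ℂ G}
    [∀ i, Simple (V i)] (hV : Pairwise fun i j ↦ IsEmpty (V i ≅ V j)) :
    LinearIndependent ℂ fun i ↦ (V i).character :=
  have := Fintype.ofFinite G
  linearIndependent_of_ne_zero_of_wInner_cWeight_eq_zero
    (fun i h ↦ character_one_ne_zero (V i) (congrFun h 1)) fun i j hij ↦ by
      simp [wInner_cWeight_character, hV hij.symm]

variable [DecidableEq n]

/-- The multiplicity of `W` in `V ⊗ A` for irreducible `V` and `W`, given by its character formula;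
for `A` of degree two these are the entries of the adjacency matrix of the McKay graph. -/
noncomputable def mcKayMult (A : G →* Matrix n n ℂ) (V W : FDRep ℂ G) : ℂ :=
  (Fintype.card G : ℂ)⁻¹ * ∑ g, V.character g * (A g).trace * conj (W.character g)

/-- The weight on `G` for which the Gram matrix of the irreducible characters is the McKay matrix
`n δ - c`, provided that the character of `A` is real. -/
noncomputable def mcKayWeight (A : G →* Matrix n n ℂ) (g : G) : ℝ :=
  (Fintype.card G : ℝ)⁻¹ * (Fintype.card n - (A g).trace.re)

variable {A : G →* Matrix n n ℂ}

theorem mcKayWeight_pos (hA : Function.Injective A) {g : G} (hg : g ≠ 1) :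
    0 < mcKayWeight A g :=
  mul_pos (by positivity) (sub_pos.2 (re_trace_lt_card ((map_ne_one_iff A hA).2 hg)))

theorem mcKayWeight_nonneg (hA : Function.Injective A) : 0 ≤ mcKayWeight A := fun g ↦ by
  obtain rfl | hg := eq_or_ne g 1
  · simp [mcKayWeight]
  · exact (mcKayWeight_pos hA hg).le

theorem re_wInner_mcKayWeight_self_pos (hA : Function.Injective A) {f : G → ℂ} {g : G}
    (hg : g ≠ 1) (hfg : f g ≠ 0) : 0 < re ⟪f, f⟫_[ℂ, mcKayWeight A] :=
  re_wInner_self_pos (mcKayWeight_nonneg hA) (mcKayWeight_pos hA hg) hfg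

theorem card_mul_mcKayMult (A : G →* Matrix n n ℂ) (V W : FDRep ℂ G) :
    Fintype.card G * mcKayMult A V W = ∑ g, V.character g * (A g).trace * W.character g⁻¹ := by
  simp only [mcKayMult, conj_character]
  exact mul_inv_cancel_left₀ (Nat.cast_ne_zero.2 Fintype.card_ne_zero) _

theorem mcKayMult_self_eq_zero_of_mem_center (V : FDRep ℂ G) [Simple V] {z : G}
    (hz : z ∈ Subgroup.center G) (hAz : A z = -1) : mcKayMult A V V = 0 := by
  have hterm (g : G) : V.character (z * g) * (A (z * g)).trace * V.character (z * g)⁻¹ =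
      -(V.character g * (A g).trace * V.character g⁻¹) := by
    rw [map_mul, hAz, neg_one_mul, trace_neg]
    linear_combination (-(A g).trace) * character_mul_character_inv_of_mem_center V hz g
  have hneg : Fintype.card G * mcKayMult A V V = -(Fintype.card G * mcKayMult A V V) := by
    rw [card_mul_mcKayMult, ← Finset.sum_neg_distrib]
    exact (Fintype.sum_equiv (Equiv.mulLeft z) _ _ fun g ↦ (hterm g).symm).symm
  simpa using self_eq_neg.1 hneg

theorem conj_mcKayMult (hreal : ∀ g, conj (A g).trace = (A g).trace) (V W : FDRep ℂ G) :
    conj (mcKayMult A V W) = mcKayMult A W V := by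
  simp only [mcKayMult, map_mul, map_inv₀, map_natCast, map_sum, conj_conj, hreal]
  exact congrArg _ (Finset.sum_congr rfl fun g _ ↦ by ring)

open Classical in
theorem wInner_mcKayWeight_character (hreal : ∀ g, conj (A g).trace = (A g).trace)
    (V W : FDRep ℂ G) [Simple V] [Simple W] :
    ⟪W.character, V.character⟫_[ℂ, mcKayWeight A] =
      Fintype.card n * (if Nonempty (V ≅ W) then 1 else 0) - mcKayMult A V W := by
  rw [← wInner_cWeight_character, wInner, wInner, mcKayMult, Finset.mul_sum, Finset.mul_sum,
    ← Finset.sum_sub_distrib]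
  refine Finset.sum_congr rfl fun g _ ↦ ?_
  rw [← Complex.conj_eq_iff_re.1 (hreal g)]
  simp only [mcKayWeight, inner_apply, Complex.real_smul, Complex.ofReal_mul, Complex.ofReal_inv,
    Complex.ofReal_natCast, Complex.ofReal_sub, Function.const_apply]
  ring

theorem re_mcKayMult_self_lt_card [Nontrivial G] (hreal : ∀ g, conj (A g).trace = (A g).trace)
    (hA : Function.Injective A) (V : FDRep ℂ G) [Simple V] :
    (mcKayMult A V V).re < Fintype.card n := by
  obtain ⟨g, hg, hVg⟩ := exists_ne_one_character_ne_zero V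
  have hpos := re_wInner_mcKayWeight_self_pos hA hg hVg
  rw [wInner_mcKayWeight_character hreal, if_pos ⟨Iso.refl V⟩] at hpos
  simpa using hpos

theorem mcKayMult_self_modEq_two (hreal : ∀ g, conj (A g).trace = (A g).trace)
    (hodd : Odd (Fintype.card G)) (V : FDRep ℂ G) {c : ℤ} (hc : c = mcKayMult A V V) :
    c ≡ Fintype.card n * Module.finrank ℂ V ^ 2 [ZMOD 2] := by
  refine modEq_two_of_sum_eq_card_mul hodd
    (f := fun g ↦ V.character g * (A g).trace * V.character g⁻¹)
    (fun g ↦ ((isIntegral_character V g).mul (isIntegral_trace_of_finite A g)).mul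
      (isIntegral_character V g⁻¹)) (fun g ↦ ?_) ?_ ?_
  · simp only [inv_inv, ← conj_trace_eq_trace_inv A g, hreal]
    ring
  · simp only [inv_one, FDRep.char_one, map_one, trace_one]
    push_cast
    ring
  · rw [hc, card_mul_mcKayMult]

theorem mcKayMult_quadraticForm_pos (hreal : ∀ g, conj (A g).trace = (A g).trace)
    (hA : Function.Injective A) {κ : Type*} [Fintype κ] [DecidableEq κ]
    {V : κ → FDRep ℂ G} [∀ i, Simple (V i)] (hV : Pairwise fun i j ↦ IsEmpty (V i ≅ V j))
    {W : FDRep ℂ G} [Simple W] (hW : ∀ i, IsEmpty (V i ≅ W)) {x : κ → ℝ} (hx : x ≠ 0) :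
    0 < ∑ i, ∑ j, x i * x j *
      (Fintype.card n * (if i = j then 1 else 0) - (mcKayMult A (V i) (V j)).re) := by
  classical
  set F : G → ℂ := ∑ i, (x i : ℂ) • (V i).character
  have hF : F ≠ 0 := fun h ↦ hx <| funext fun i ↦ Complex.ofReal_eq_zero.1 <|
    Fintype.linearIndependent_iff.1 (linearIndependent_character hV) _ h i
  have horth : ⟪W.character, F⟫ₙ_[ℂ] = 0 := by
    simp [F, wInner_sum_right, wInner_smul_right, wInner_cWeight_character,
      fun i ↦ not_nonempty_iff.2 (hW i)]
  obtain ⟨g, hg, hFg⟩ := exists_ne_apply_ne_zero_of_wInner_cWeight_eq_zero hF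
    (character_one_ne_zero W) horth
  have hiso (i j) : Nonempty (V i ≅ V j) ↔ i = j :=
    ⟨fun h ↦ by_contra fun hij ↦ not_isEmpty_iff.2 h (hV hij), fun h ↦ h ▸ ⟨Iso.refl _⟩⟩
  have hpos := re_wInner_mcKayWeight_self_pos hA hg hFg
  simp only [F, wInner_self_sum_smul, wInner_mcKayWeight_character hreal, hiso] at hpos
  convert hpos using 1
  simp only [map_sum]
  refine Finset.sum_congr rfl fun i _ ↦ Finset.sum_congr rfl fun j _ ↦ ?_
  split_ifs <;> simp

end McKay

theorem mcKayMult_self_eq_zero_of_injective {G : Type*} [Group G] [Fintype G] [Nontrivial G]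
    {φ : G →* SpecialLinearGroup (Fin 2) ℂ} (hφ : Function.Injective φ) (V : FDRep ℂ G)
    [Simple V] {c : ℕ} (hc : c = mcKayMult (SpecialLinearGroup.coeMonoidHom.comp φ) V V) :
    c = 0 := by
  set A := SpecialLinearGroup.coeMonoidHom.comp φ
  obtain heven | hodd := Nat.even_or_odd (Fintype.card G)
  · obtain ⟨z, hz, hφz⟩ := exists_mem_center_map_eq_neg_one hφ
      (Nat.card_eq_fintype_card (α := G) ▸ heven)
    have hAz : A z = -1 := by simp [A, hφz]
    exact Nat.cast_eq_zero.1 (hc.trans (mcKayMult_self_eq_zero_of_mem_center V hz hAz))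
  · have hreal (g : G) : conj (A g).trace = (A g).trace :=
      conj_trace_specialLinearGroup_fin_two φ g
    have hlt : c < 2 := by
      simpa [← hc] using re_mcKayMult_self_lt_card hreal
        (SpecialLinearGroup.coeMonoidHom_injective.comp hφ) V
    have hmod : (c : ℤ) ≡ 0 [ZMOD 2] := by
      refine (mcKayMult_self_modEq_two hreal hodd V (by exact_mod_cast hc)).trans ?_
      simp [Int.modEq_zero_iff_dvd]
    rw [Int.modEq_zero_iff_dvd] at hmod
    omega

theorem stmt_5_general {G : Type*} [Group G] [Fintype G] [Nontrivial G]
    (φ : G →* Matrix.SpecialLinearGroup (Fin 2) ℂ) (hφ : Function.Injective φ)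
    {ι : Type*} [Fintype ι] [DecidableEq ι]
    (ρ : ι → FDRep ℂ G) (hirr : ∀ i, Simple (ρ i))
    (hdist : ∀ i j : ι, i ≠ j → IsEmpty (ρ i ≅ ρ j))
    (i₀ : ι) (c : ι → ι → ℕ)
    (hc : ∀ i j, (c i j : ℂ) = (Fintype.card G : ℂ)⁻¹ *
      ∑ g : G, (ρ i).character g * Matrix.trace (φ g : Matrix (Fin 2) (Fin 2) ℂ) *
        (starRingEnd ℂ) ((ρ j).character g)) :
    (∀ i, c i i = 0) ∧
    (∀ i j, c i j = c j i) ∧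
    (∀ x : {i : ι // i ≠ i₀} → ℝ, x ≠ 0 →
      0 < ∑ i : {i : ι // i ≠ i₀}, ∑ j : {i : ι // i ≠ i₀},
        x i * x j * (2 * (if (i : ι) = (j : ι) then 1 else 0) - (c i j : ℝ))) := by
  set A := SpecialLinearGroup.coeMonoidHom.comp φ
  have hA : Function.Injective A := SpecialLinearGroup.coeMonoidHom_injective.comp hφ
  have hreal (g : G) : conj (A g).trace = (A g).trace :=
    conj_trace_specialLinearGroup_fin_two φ g
  have hmult (i j) : (c i j : ℂ) = mcKayMult A (ρ i) (ρ j) := hc i j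
  refine ⟨fun i ↦ mcKayMult_self_eq_zero_of_injective hφ (ρ i) (hmult i i), fun i j ↦ ?_,
    fun x hx ↦ ?_⟩
  · rw [← Nat.cast_inj (R := ℂ), hmult, hmult, ← conj_mcKayMult hreal, ← hmult, map_natCast]
  · simpa [← hmult, Subtype.ext_iff] using mcKayMult_quadraticForm_pos hreal hA
      (V := fun i : {i // i ≠ i₀} ↦ ρ i) (fun i j hij ↦ hdist i j (Subtype.coe_ne_coe.2 hij))
      (W := ρ i₀) (fun i ↦ hdist i i₀ i.2) hx

/-- In the McKay setting, if moreover `G` is nontrivial, then `c_{ii} = 0`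
for all `i`, `c_{ij} = c_{ji}`, and the matrix `(2δ_{ij} − c_{ij})_{i,j ∈ I}`, where
`I = ι ∖ {i₀}` (removing the index of the trivial representation), is symmetric positive
definite. -/
theorem stmt_5 {G : Type} [Group G] [Fintype G] [Nontrivial G]
    (φ : G →* Matrix.SpecialLinearGroup (Fin 2) ℂ) (hφ : Function.Injective φ)
    {ι : Type} [Fintype ι] [DecidableEq ι]
    (ρ : ι → FDRep ℂ G) (hirr : ∀ i, Simple (ρ i))
    (hdist : ∀ i j : ι, i ≠ j → IsEmpty (ρ i ≅ ρ j))
    (hcomplete : ∀ V : FDRep ℂ G, Simple V → ∃ i, Nonempty (V ≅ ρ i))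
    (i₀ : ι) (hdim : Module.finrank ℂ (ρ i₀) = 1)
    (htriv : ∀ g : G, (ρ i₀).ρ g = LinearMap.id)
    (c : ι → ι → ℕ)
    (hc : ∀ i j, (c i j : ℂ) = (Fintype.card G : ℂ)⁻¹ *
      ∑ g : G, (ρ i).character g * Matrix.trace (φ g : Matrix (Fin 2) (Fin 2) ℂ) *
        (starRingEnd ℂ) ((ρ j).character g)) :
    (∀ i, c i i = 0) ∧
    (∀ i j, c i j = c j i) ∧
    (∀ x : {i : ι // i ≠ i₀} → ℝ, x ≠ 0 →
      0 < ∑ i : {i : ι // i ≠ i₀}, ∑ j : {i : ι // i ≠ i₀},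
        x i * x j * (2 * (if (i : ι) = (j : ι) then 1 else 0) - (c i j : ℝ))) :=
  stmt_5_general φ hφ ρ hirr hdist i₀ c hc
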